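/- Let m ≥ 0 and n ≥ 1 be integers and let P(u₀,…,u_m; v₀,v₁) be a polynomial in m+3 variables whose coefficients are polynomials in z ∈ ℂ, such that P(ζ(z), ζ'(z), …, ζ^{(m)}(z); Γ(z), Γ^{(n)}(z)) = 0 for every z ∈ ℂ at which ζ and Γ are analytic. Then P is the identically zero polynomial. -/

import Mathlib

/-!
On the real half-line the terms of a relation have pairwise different orders of magnitude as
`s → ∞`, so they cannot cancel. A polynomial in the derivatives of `ζ` is a Dirichlet series, and it
has order `N⁻ˢ` for its least index `N` of a nonzero coefficient; such an index exists because the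
coefficient functions `n ↦ (-log n) ^ k` are algebraically independent for Dirichlet convolution, by
the Jacobian criterion for derivations attached to primes, whose Jacobian has a Vandermonde
determinant as its constant term. On the other side `Γ⁽ⁿ⁾ = Γ w`, where `w(s) = 𝔼 (log X)ⁿ` for a
Gamma variable `X` of shape `s` tends to infinity, but more slowly than any positive power of `s`.
Hence each term has the order of some `Γ(s)ᵈ N⁻ˢ sᴬ w(s)ᴮ`, and these monomials are ordered
lexicographically.
-/

open Filter Topology Asymptotics
open scoped Matrix

section JacobianCriterion

open MvPolynomial

theorem totalDegree_pderiv_le {σ R : Type*} [CommSemiring R] (i : σ) (p : MvPolynomial σ R) :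
    (pderiv i p).totalDegree ≤ p.totalDegree - 1 := by
  classical
  refine Finset.sup_le fun m hm => Nat.le_sub_one_of_lt ?_
  have hcoeff : coeff (m + Finsupp.single i 1) p ≠ 0 := fun h => by
    simp [coeff_pderiv, h] at hm
  have hdeg := le_totalDegree (mem_support_iff.2 hcoeff)
  rw [Finsupp.sum_add_index' (fun _ => rfl) (fun _ _ _ => rfl),
    Finsupp.sum_single_index rfl] at hdeg
  exact hdeg

theorem eq_C_of_forall_pderiv_eq_zero {σ R : Type*} [CommSemiring R] [NoZeroDivisors R]
    [CharZero R] {p : MvPolynomial σ R} (hp : ∀ i, pderiv i p = 0) : p = C (coeff 0 p) := by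
  classical
  ext m
  rw [coeff_C]
  split_ifs with hm
  · rw [hm]
  · obtain ⟨i, hi⟩ := Finsupp.ne_iff.1 (Ne.symm hm)
    have hsplit : m - Finsupp.single i 1 + Finsupp.single i 1 = m :=
      tsub_add_cancel_of_le (Finsupp.single_le_iff.2 (Nat.one_le_iff_ne_zero.2 hi))
    have hcoeff := coeff_pderiv (i := i) p (m - Finsupp.single i 1)
    rw [hp i, coeff_zero, hsplit] at hcoeff
    exact (mul_eq_zero.1 hcoeff.symm).resolve_right (Nat.cast_add_one_ne_zero _)

theorem derivation_aeval_eq_sum_pderiv {ι R A : Type*} [Fintype ι] [CommSemiring R] [CommSemiring A]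
    [Algebra R A] (D : Derivation R A A) (f : ι → A) (p : MvPolynomial ι R) :
    D (aeval f p) = ∑ j, D (f j) * aeval f (pderiv j p) := by
  classical
  induction p using MvPolynomial.induction_on with
  | C a => simp
  | add p q hp hq => simp only [map_add, hp, hq, mul_add, Finset.sum_add_distrib]
  | mul_X p i hp =>
    simp only [map_mul, Derivation.leibniz, smul_eq_mul, map_add, aeval_X, pderiv_X, hp,
      Finset.mul_sum, mul_add, Finset.sum_add_distrib]
    congr 1
    · simp [Pi.single_apply, mul_comm]
    · exact Finset.sum_congr rfl fun j _ => mul_left_comm _ _ _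

/-- The Jacobian criterion. A relation of least degree would be killed by each of the `D i`, so its
partial derivatives would be relations of smaller degree. -/
theorem algebraicIndependent_of_det_derivation_ne_zero {ι K A : Type*} [Fintype ι] [DecidableEq ι]
    [Field K] [CharZero K] [CommRing A] [IsDomain A] [Algebra K A] (f : ι → A)
    (D : ι → Derivation K A A) (hdet : (Matrix.of fun i j => D i (f j)).det ≠ 0) :
    AlgebraicIndependent K f := by
  rw [algebraicIndependent_iff]
  suffices h : ∀ d, ∀ p : MvPolynomial ι K, p.totalDegree ≤ d → aeval f p = 0 → p = 0 from
    fun p => h _ p le_rfl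
  have eq_zero_of_const {p : MvPolynomial ι K} (hp : p = C (coeff 0 p)) (h0 : aeval f p = 0) :
      p = 0 := by
    rw [hp, aeval_C, map_eq_zero_iff _ (algebraMap K A).injective] at h0
    rw [hp, h0, C_0]
  intro d
  induction d with
  | zero => exact fun p hp => eq_zero_of_const (totalDegree_eq_zero_iff_eq_C.1 (Nat.le_zero.1 hp))
  | succ d ih =>
    intro p hp h0
    have hrel : Matrix.of (fun i j => D i (f j)) *ᵥ (fun j => aeval f (pderiv j p)) = 0 := by
      funext i
      rw [Pi.zero_apply, ← map_zero (D i), ← h0, derivation_aeval_eq_sum_pderiv]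
      rfl
    have hpderiv := Matrix.eq_zero_of_mulVec_eq_zero hdet hrel
    refine eq_zero_of_const (eq_C_of_forall_pderiv_eq_zero fun j => ?_) h0
    exact ih _ ((totalDegree_pderiv_le j p).trans (by omega)) (congrFun hpderiv j)

end JacobianCriterion

section ArithmeticFunctions

open ArithmeticFunction

theorem exists_leading_index {R : Type*} [Zero R] {f : ArithmeticFunction R} (hf : f ≠ 0) :
    ∃ N : ℕ+, f N ≠ 0 ∧ ∀ m < (N : ℕ), f m = 0 := by
  classical
  have hex : ∃ n, f n ≠ 0 := by
    by_contra! h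
    exact hf (ArithmeticFunction.ext h)
  have hpos : Nat.find hex ≠ 0 := fun h =>
    Nat.find_spec hex (by rw [h, ArithmeticFunction.map_zero])
  exact ⟨⟨Nat.find hex, Nat.pos_of_ne_zero hpos⟩, Nat.find_spec hex,
    fun m hm => not_not.1 (Nat.find_min hex hm)⟩

instance {R : Type*} [Semiring R] [NoZeroDivisors R] : NoZeroDivisors (ArithmeticFunction R) where
  eq_zero_or_eq_zero_of_mul_eq_zero {f g} hfg := by
    by_contra! ⟨hf, hg⟩
    obtain ⟨N, hN, hNmin⟩ := exists_leading_index hf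
    obtain ⟨M, hM, hMmin⟩ := exists_leading_index hg
    refine mul_ne_zero hN hM ?_
    have hzero : (f * g) (N * M : ℕ) = 0 := by rw [hfg, ArithmeticFunction.zero_apply]
    rw [mul_apply] at hzero
    refine (Finset.sum_eq_single ((N : ℕ), (M : ℕ)) ?_ ?_).symm.trans hzero
    · rintro ⟨a, b⟩ hab hne
      have hprod : a * b = N * M := (Nat.mem_divisorsAntidiagonal.1 hab).1
      rcases lt_or_ge a N with ha | ha
      · rw [hNmin a ha, zero_mul]
      rcases lt_or_ge b M with hb | hb
      · rw [hMmin b hb, mul_zero]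
      have := N.pos
      have := M.pos
      exact absurd (Prod.ext (by nlinarith) (by nlinarith)) hne
    · exact fun h => absurd (Nat.mem_divisorsAntidiagonal.2 ⟨rfl, by positivity⟩) h

theorem mul_apply_mul_left_of_support {R : Type*} [Semiring R] {p : ℕ} (hp : p ≠ 0)
    {f : ArithmeticFunction R} (hf : ∀ x, ¬p ∣ x → f x = 0) (g : ArithmeticFunction R) (n : ℕ) :
    (f * g) (p * n) = ∑ x ∈ n.divisorsAntidiagonal, f (p * x.1) * g x.2 := by
  rw [mul_apply]
  symm
  refine Finset.sum_of_injOn (fun x => (p * x.1, x.2)) ?_ ?_ ?_ fun _ _ => rfl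
  · rintro ⟨a, b⟩ _ ⟨a', b'⟩ _ h
    simpa [hp] using h
  · rintro ⟨a, b⟩ hab
    obtain ⟨rfl, hn⟩ := Nat.mem_divisorsAntidiagonal.1 hab
    exact Nat.mem_divisorsAntidiagonal.2 ⟨mul_assoc _ _ _, mul_ne_zero hp hn⟩
  · rintro ⟨a, b⟩ hab hnot
    obtain ⟨hprod, hpn⟩ := Nat.mem_divisorsAntidiagonal.1 hab
    rw [hf a, zero_mul]
    rintro ⟨a, rfl⟩
    refine hnot ⟨(a, b), Nat.mem_divisorsAntidiagonal.2 ⟨?_, right_ne_zero_of_mul hpn⟩, rfl⟩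
    exact Nat.eq_of_mul_eq_mul_left (Nat.pos_of_ne_zero hp) (by rw [← hprod, mul_assoc])

/-- The arithmetic function `n ↦ v_p(n) f(n)`; it is the derivation `X_p ∂/∂X_p` when arithmetic
functions are viewed as formal power series, `n` standing for the monomial `∏ p, X_p ^ v_p(n)`. -/
def factorizationMul {R : Type*} [Semiring R] (p : ℕ) (f : ArithmeticFunction R) :
    ArithmeticFunction R :=
  ⟨fun n => n.factorization p * f n, by simp⟩

theorem factorizationMul_mul {R : Type*} [CommSemiring R] (p : ℕ) (f g : ArithmeticFunction R) :
    factorizationMul p (f * g) = factorizationMul p f * g + factorizationMul p g * f := by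
  ext n
  rw [mul_comm _ f, ArithmeticFunction.add_apply, mul_apply, mul_apply, ← Finset.sum_add_distrib]
  simp only [factorizationMul, coe_mk, mul_apply, Finset.mul_sum]
  refine Finset.sum_congr rfl fun x hx => ?_
  obtain ⟨rfl, hn⟩ := Nat.mem_divisorsAntidiagonal.1 hx
  rw [Nat.factorization_mul (left_ne_zero_of_mul hn) (right_ne_zero_of_mul hn)]
  push_cast [Finsupp.add_apply]
  ring

theorem factorizationMul_apply_of_not_dvd {R : Type*} [Semiring R] {p : ℕ}
    (f : ArithmeticFunction R) (x : ℕ) (hx : ¬p ∣ x) : factorizationMul p f x = 0 := by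
  rw [factorizationMul, coe_mk, Nat.factorization_eq_zero_of_not_dvd hx, Nat.cast_zero, zero_mul]

/-- The derivation `∂/∂X_p` of the ring of arithmetic functions viewed as formal power series, `n`
standing for the monomial `∏ p, X_p ^ v_p(n)`. -/
def primeDerivation (R : Type*) [CommRing R] (p : Nat.Primes) :
    Derivation R (ArithmeticFunction R) (ArithmeticFunction R) :=
  Derivation.mk'
    { toFun := fun f => ⟨fun n => factorizationMul p f (p * n), by simp⟩
      map_add' := fun f g => by ext n; exact mul_add _ _ _
      map_smul' := fun r f => by ext n; exact mul_left_comm _ _ _ }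
    fun f g => by
      ext n
      have hsplit (h k : ArithmeticFunction R) :=
        mul_apply_mul_left_of_support p.2.ne_zero (factorizationMul_apply_of_not_dvd h) k n
      change factorizationMul p (f * g) (p * n) = _
      rw [factorizationMul_mul, ArithmeticFunction.add_apply, hsplit, hsplit, smul_eq_mul,
        smul_eq_mul, mul_comm f, mul_comm g, add_comm]
      rfl

theorem primeDerivation_apply_one {R : Type*} [CommRing R] (p : Nat.Primes)
    (f : ArithmeticFunction R) : primeDerivation R p f 1 = f p := by
  change ((p * 1 : ℕ).factorization p : R) * f (p * 1) = f p
  rw [mul_one, p.2.factorization_self, Nat.cast_one, one_mul]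

/-- Evaluation at `1`: the constant term of an arithmetic function viewed as a formal power
series. -/
def evalOneHom (R : Type*) [Semiring R] : ArithmeticFunction R →+* R where
  toFun f := f 1
  map_one' := one_one
  map_mul' f g := by simp
  map_zero' := rfl
  map_add' _ _ := rfl

theorem algebraicIndependent_of_det_apply_prime_ne_zero {ι K : Type*} [Fintype ι] [DecidableEq ι]
    [Field K] [CharZero K] (f : ι → ArithmeticFunction K) (p : ι → Nat.Primes)
    (hdet : (Matrix.of fun i j => f j (p i)).det ≠ 0) : AlgebraicIndependent K f := by
  have : Nontrivial (ArithmeticFunction K) := (evalOneHom K).domain_nontrivial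
  have : IsDomain (ArithmeticFunction K) := NoZeroDivisors.to_isDomain _
  refine algebraicIndependent_of_det_derivation_ne_zero f (fun i => primeDerivation K (p i)) ?_
  intro h
  refine hdet ?_
  have hone := congrArg (evalOneHom K) h
  rw [_root_.map_zero, RingHom.map_det] at hone
  rw [← hone]
  congr 1
  ext i j
  exact (primeDerivation_apply_one (p i) (f j)).symm

end ArithmeticFunctions

section ZetaDerivatives

open ArithmeticFunction

/-- The Dirichlet coefficients `(-log n) ^ k` of the `k`-th derivative of `ζ`. -/
noncomputable def zetaDerivCoeff (k : ℕ) : ArithmeticFunction ℂ :=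
  ⟨fun n => if n = 0 then 0 else (-Complex.log n) ^ k, if_pos rfl⟩

theorem zetaDerivCoeff_apply (k : ℕ) {n : ℕ} (hn : n ≠ 0) :
    zetaDerivCoeff k n = (-Complex.log n) ^ k :=
  if_neg hn

theorem logMul_iterate_apply (f : ℕ → ℂ) (k n : ℕ) :
    (LSeries.logMul^[k] f) n = Complex.log n ^ k * f n := by
  induction k with
  | zero => rw [Function.iterate_zero_apply, pow_zero, one_mul]
  | succ k ih => rw [Function.iterate_succ_apply', LSeries.logMul, ih, pow_succ', mul_assoc]

theorem zetaDerivCoeff_apply_eq_smul_logMul_iterate (k : ℕ) {n : ℕ} (hn : n ≠ 0) :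
    zetaDerivCoeff k n = ((-1 : ℂ) ^ k • LSeries.logMul^[k] 1) n := by
  rw [zetaDerivCoeff_apply k hn, Pi.smul_apply, logMul_iterate_apply, neg_pow, Pi.one_apply,
    mul_one, smul_eq_mul]

theorem lseriesHasSum_zetaDerivCoeff (k : ℕ) {s : ℂ} (hs : 1 < s.re) :
    LSeriesHasSum (zetaDerivCoeff k) s (iteratedDeriv k riemannZeta s) := by
  have hcoeff {n : ℕ} (hn : n ≠ 0) := zetaDerivCoeff_apply_eq_smul_logMul_iterate k hn
  have habscissa : LSeries.abscissaOfAbsConv 1 < s.re := by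
    rw [LSeries.abscissaOfAbsConv_one]
    exact_mod_cast hs
  have hzeta : LSeries 1 =ᶠ[𝓝 s] riemannZeta := by
    filter_upwards [(isOpen_lt continuous_const Complex.continuous_re).mem_nhds hs] with z hz
    exact LSeries_one_eq_riemannZeta hz
  rw [LSeriesHasSum_iff]
  constructor
  · rw [LSeriesSummable_congr s hcoeff]
    refine LSeriesSummable.smul _ (LSeriesSummable_of_abscissaOfAbsConv_lt_re ?_)
    rwa [LSeries.absicssaOfAbsConv_logPowMul]
  · rw [LSeries_congr hcoeff, LSeries_smul, ← LSeries_iteratedDeriv k habscissa,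
      hzeta.iteratedDeriv_eq]

theorem lseriesHasSum_algebraMap (a s : ℂ) :
    LSeriesHasSum (algebraMap ℂ (ArithmeticFunction ℂ) a) s a := by
  have hdelta : LSeriesHasSum LSeries.delta s 1 := by
    rw [LSeriesHasSum, funext (LSeries.term_delta s)]
    exact hasSum_ite_eq 1 1
  have hcoe : ⇑(algebraMap ℂ (ArithmeticFunction ℂ) a) = a • LSeries.delta := by
    rw [Algebra.algebraMap_eq_smul_one, ← one_eq_delta]
    rfl
  simpa only [hcoe, mul_one] using hdelta.smul a

theorem lseriesHasSum_aeval {σ : Type*} {f : σ → ArithmeticFunction ℂ} {s : ℂ} {a : σ → ℂ}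
    (hf : ∀ k, LSeriesHasSum (f k) s (a k)) (q : MvPolynomial σ ℂ) :
    LSeriesHasSum (MvPolynomial.aeval f q : ArithmeticFunction ℂ) s (MvPolynomial.eval a q) := by
  induction q using MvPolynomial.induction_on with
  | C c =>
    rw [MvPolynomial.aeval_C, MvPolynomial.eval_C]
    exact lseriesHasSum_algebraMap c s
  | add p q hp hq =>
    rw [_root_.map_add, _root_.map_add]
    exact hp.add hq
  | mul_X p k hp =>
    rw [_root_.map_mul, _root_.map_mul, MvPolynomial.aeval_X, MvPolynomial.eval_X]
    exact LSeriesHasSum_mul hp (hf k)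

theorem algebraicIndependent_zetaDerivCoeff (M : ℕ) :
    AlgebraicIndependent ℂ fun k : Fin M => zetaDerivCoeff k := by
  let p : Fin M → Nat.Primes := fun i => ⟨Nat.nth Nat.Prime i, Nat.prime_nth_prime i⟩
  have hlog : Function.Injective fun i : Fin M => -Complex.log (p i : ℕ) := by
    intro i j hij
    have hlog' : Real.log (p i : ℕ) = Real.log (p j : ℕ) := by
      simpa only [neg_inj, ← Complex.natCast_log, Complex.ofReal_inj] using hij
    have hpos (i : Fin M) : (0 : ℝ) < (p i : ℕ) := Nat.cast_pos.2 (p i).2.pos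
    exact Fin.ext (Nat.nth_injective Nat.infinite_setOfPred_prime
      (Nat.cast_injective (Real.log_injOn_pos (hpos i) (hpos j) hlog')))
  have hvandermonde : Matrix.of (fun i j : Fin M => zetaDerivCoeff j (p i)) =
      Matrix.vandermonde fun i => -Complex.log (p i : ℕ) := by
    ext i j
    exact zetaDerivCoeff_apply j (p i).2.ne_zero
  refine algebraicIndependent_of_det_apply_prime_ne_zero _ p ?_
  rw [hvandermonde]
  exact Matrix.det_vandermonde_ne_zero_iff.2 hlog

theorem lseries_isTheta_of_leading_index {f : ℕ → ℂ} {N : ℕ+} (hN : f N ≠ 0)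
    (hmin : ∀ m < (N : ℕ), f m = 0) (hf : LSeries.abscissaOfAbsConv f < ⊤) :
    (fun s : ℝ => LSeries f s) =Θ[atTop] fun s => ((N : ℝ) ^ s)⁻¹ := by
  obtain ⟨n, rfl⟩ : ∃ n : ℕ, N = n.succPNat := ⟨_, N.succPNat_natPred.symm⟩
  have hlim := LSeries.tendsto_cpow_mul_atTop (fun m hm => hmin m (Nat.lt_succ_of_le hm)) hf
  refine IsTheta.trans ?_ (Complex.isTheta_ofReal _ atTop)
  refine (isTheta_of_div_tendsto_nhds_ne_zero (c := f (n + 1)) (hlim.congr fun s => ?_) hN).symm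
  rw [Complex.ofReal_inv, div_inv_eq_mul, mul_comm, Complex.ofReal_cpow (Nat.cast_nonneg _)]
  norm_num

theorem exists_eval_iteratedDeriv_riemannZeta_isTheta {M : ℕ} {q : MvPolynomial (Fin M) ℂ}
    (hq : q ≠ 0) :
    ∃ N : ℕ+, (fun s : ℝ => MvPolynomial.eval (fun k : Fin M => iteratedDeriv k riemannZeta s) q)
      =Θ[atTop] fun s => ((N : ℝ) ^ s)⁻¹ := by
  set f := MvPolynomial.aeval (fun k : Fin M => zetaDerivCoeff k) q
  have hf0 : f ≠ 0 := fun h =>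
    hq (algebraicIndependent_iff.1 (algebraicIndependent_zetaDerivCoeff M) q h)
  have hsum {s : ℂ} (hs : 1 < s.re) :=
    lseriesHasSum_aeval (fun k : Fin M => lseriesHasSum_zetaDerivCoeff k hs) q
  obtain ⟨N, hN, hmin⟩ := exists_leading_index hf0
  have habscissa : LSeries.abscissaOfAbsConv f < ⊤ :=
    (hsum (s := 2) (by norm_num)).LSeriesSummable.abscissaOfAbsConv_le.trans_lt
      (EReal.coe_lt_top _)
  refine ⟨N, EventuallyEq.trans_isTheta ?_ (lseries_isTheta_of_leading_index hN hmin habscissa)⟩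
  filter_upwards [eventually_gt_atTop 1] with s hs
  exact (hsum (by simpa using hs)).LSeries_eq.symm

end ZetaDerivatives

section GammaDerivatives

open MeasureTheory Set

/-- The density `e⁻ˣ x ^ (s - 1)` of Euler's integral `Γ(s)`. -/
noncomputable def gammaWeight (s x : ℝ) : ℝ :=
  Real.exp (-x) * x ^ (s - 1)

/-- The `n`-th moment of `log X`, where `X` is Gamma distributed with shape `s`. -/
noncomputable def gammaLogMoment (n : ℕ) (s : ℝ) : ℝ :=
  (∫ x in Ioi 0, Real.log x ^ n * gammaWeight s x) / Real.Gamma s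

theorem gammaWeight_pos (s : ℝ) {x : ℝ} (hx : 0 < x) : 0 < gammaWeight s x :=
  mul_pos (Real.exp_pos _) (Real.rpow_pos_of_pos hx _)

theorem rpow_mul_gammaWeight (a s : ℝ) {x : ℝ} (hx : 0 < x) :
    x ^ a * gammaWeight s x = Real.exp (-x) * x ^ (s + a - 1) := by
  rw [gammaWeight, mul_left_comm, ← Real.rpow_add hx]
  congr 2
  ring

theorem integrableOn_rpow_mul_gammaWeight {a s : ℝ} (h : 0 < s + a) :
    IntegrableOn (fun x => x ^ a * gammaWeight s x) (Ioi 0) :=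
  (Real.GammaIntegral_convergent h).congr_fun
    (fun _ hx => (rpow_mul_gammaWeight a s hx).symm) measurableSet_Ioi

theorem integral_rpow_mul_gammaWeight {a s : ℝ} (h : 0 < s + a) :
    ∫ x in Ioi 0, x ^ a * gammaWeight s x = Real.Gamma (s + a) := by
  rw [Real.Gamma_eq_integral h]
  exact setIntegral_congr_fun measurableSet_Ioi fun _ hx => rpow_mul_gammaWeight a s hx

theorem abs_log_pow_le (n : ℕ) {δ x : ℝ} (hδ : 0 < δ) (hx : 0 < x) :
    |Real.log x| ^ n ≤ n.factorial / δ ^ n * (x ^ δ + x ^ (-δ)) := by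
  have hexp : (δ * |Real.log x|) ^ n / n.factorial ≤ x ^ δ + x ^ (-δ) := calc
    _ ≤ Real.exp (δ * |Real.log x|) := Real.pow_div_factorial_le_exp _ (by positivity) n
    _ = Real.exp |Real.log x * δ| := by rw [abs_mul, abs_of_pos hδ, mul_comm]
    _ ≤ x ^ δ + x ^ (-δ) := by
      rw [Real.rpow_def_of_pos hx, Real.rpow_def_of_pos hx, mul_neg]
      exact Real.exp_abs_le _
  rw [mul_pow, div_le_iff₀ (by positivity)] at hexp
  rw [div_mul_eq_mul_div, le_div_iff₀ (by positivity)]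
  linarith

theorem norm_log_pow_mul_gammaWeight_le (n : ℕ) (s : ℝ) {δ x : ℝ} (hδ : 0 < δ) (hx : 0 < x) :
    ‖Real.log x ^ n * gammaWeight s x‖ ≤
      n.factorial / δ ^ n * (x ^ δ * gammaWeight s x + x ^ (-δ) * gammaWeight s x) := by
  rw [norm_mul, norm_pow, Real.norm_eq_abs, Real.norm_of_nonneg (gammaWeight_pos s hx).le,
    ← add_mul, ← mul_assoc]
  exact mul_le_mul_of_nonneg_right (abs_log_pow_le n hδ hx) (gammaWeight_pos s hx).le

theorem integrableOn_log_pow_mul_gammaWeight (n : ℕ) {s : ℝ} (hs : 0 < s) :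
    IntegrableOn (fun x => Real.log x ^ n * gammaWeight s x) (Ioi 0) := by
  have hδ : 0 < s / 2 := half_pos hs
  have hbound := ((integrableOn_rpow_mul_gammaWeight (by linarith : 0 < s + s / 2)).add
    (integrableOn_rpow_mul_gammaWeight (by linarith : 0 < s + -(s / 2)))).const_mul
      (n.factorial / (s / 2) ^ n)
  refine Integrable.mono' hbound ?_ ?_
  · unfold gammaWeight
    exact Measurable.aestronglyMeasurable (by fun_prop)
  · filter_upwards [ae_restrict_mem measurableSet_Ioi] with x hx
    exact norm_log_pow_mul_gammaWeight_le n s hδ hx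

theorem hasDerivAt_mellin_log_pow_mul_exp_neg (n : ℕ) {s : ℂ} (hs : 0 < s.re) :
    HasDerivAt (mellin fun t : ℝ => ((Real.log t ^ n * Real.exp (-t) : ℝ) : ℂ))
      (mellin (fun t : ℝ => ((Real.log t ^ (n + 1) * Real.exp (-t) : ℝ) : ℂ)) s) s := by
  have hcont : ContinuousOn (fun t : ℝ => ((Real.log t ^ n * Real.exp (-t) : ℝ) : ℂ)) (Ioi 0) := by
    refine Complex.continuous_ofReal.comp_continuousOn (ContinuousOn.mul ?_ (by fun_prop))
    exact (Real.continuousOn_log.mono fun x hx => ne_of_gt hx).pow n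
  have htop : (fun t : ℝ => ((Real.log t ^ n * Real.exp (-t) : ℝ) : ℂ)) =O[atTop]
      fun t => t ^ (-(s.re + 1)) := by
    rw [Complex.isBigO_ofReal_left]
    have hexp := isLittleO_exp_neg_mul_rpow_atTop one_pos (-(s.re + 1) - 1)
    refine ((Real.isLittleO_pow_log_id_atTop (n := n)).mul hexp).isBigO.congr' ?_ ?_
    · filter_upwards with t
      rw [neg_one_mul]
    · filter_upwards [eventually_gt_atTop 0] with t ht
      rw [Real.rpow_sub_one ht.ne', id, mul_div_cancel₀ _ ht.ne']
  have hzero : (fun t : ℝ => ((Real.log t ^ n * Real.exp (-t) : ℝ) : ℂ)) =O[𝓝[>] 0]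
      fun t => t ^ (-(s.re / 2)) := by
    rw [Complex.isBigO_ofReal_left]
    have hlog : (fun t => Real.log t ^ n) =o[𝓝[>] 0] fun t => t ^ (-(s.re / 2)) := by
      refine .of_norm_left ?_
      simpa using isLittleO_abs_log_rpow_rpow_nhdsGT_zero n (neg_neg_of_pos (half_pos hs))
    have hexp : (fun t : ℝ => Real.exp (-t)) =O[𝓝[>] 0] fun _ => (1 : ℝ) :=
      ((by fun_prop : Continuous fun t : ℝ => Real.exp (-t)).continuousAt.isBigO_one ℝ).mono
        nhdsWithin_le_nhds
    simpa only [mul_one] using hlog.isBigO.mul hexp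
  have hderiv := (mellin_hasDerivAt_of_isBigO_rpow (hcont.locallyIntegrableOn measurableSet_Ioi)
    htop (lt_add_one _) hzero (half_lt_self hs)).2
  simpa only [Complex.real_smul, ← Complex.ofReal_mul, ← mul_assoc, ← pow_succ'] using hderiv

theorem iteratedDeriv_Gamma_eq_mellin (n : ℕ) {s : ℂ} (hs : 0 < s.re) :
    iteratedDeriv n Complex.Gamma s =
      mellin (fun t : ℝ => ((Real.log t ^ n * Real.exp (-t) : ℝ) : ℂ)) s := by
  induction n generalizing s with
  | zero =>
    simp only [iteratedDeriv_zero, pow_zero, one_mul, Complex.Gamma_eq_integral hs,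
      Complex.GammaIntegral_eq_mellin]
  | succ n ih =>
    have heq : iteratedDeriv n Complex.Gamma =ᶠ[𝓝 s]
        mellin fun t : ℝ => ((Real.log t ^ n * Real.exp (-t) : ℝ) : ℂ) := by
      filter_upwards [(isOpen_lt continuous_const Complex.continuous_re).mem_nhds hs] with z hz
      exact ih hz
    rw [iteratedDeriv_succ, heq.deriv_eq, (hasDerivAt_mellin_log_pow_mul_exp_neg n hs).deriv]

theorem iteratedDeriv_Gamma_ofReal (n : ℕ) {s : ℝ} (hs : 0 < s) :
    iteratedDeriv n Complex.Gamma s = ((Real.Gamma s * gammaLogMoment n s : ℝ) : ℂ) := by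
  rw [gammaLogMoment, mul_div_cancel₀ _ (Real.Gamma_pos_of_pos hs).ne',
    iteratedDeriv_Gamma_eq_mellin n (by simpa using hs), mellin, ← integral_complex_ofReal]
  refine setIntegral_congr_fun measurableSet_Ioi fun x hx => ?_
  simp only [gammaWeight, smul_eq_mul]
  push_cast [Complex.ofReal_cpow (le_of_lt hx)]
  ring

theorem exists_sub_mul_inv_le_log_pow {n : ℕ} (hn : n ≠ 0) (M : ℝ) :
    ∃ Q, ∀ x, 0 < x → M - Q * x⁻¹ ≤ Real.log x ^ n := by
  set L := max M 1
  set E := Real.exp L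
  have : 0 < E := Real.exp_pos L
  have : 0 < L := one_pos.trans_le (le_max_right M 1)
  refine ⟨L * E + n.factorial * (E ^ 2 + 1), fun x hx => ?_⟩
  rcases le_total E x with hEx | hxE
  · have hlog : L ≤ Real.log x := (Real.le_log_iff_exp_le hx).2 hEx
    have hpow : M ≤ Real.log x ^ n := calc
      M ≤ L := le_max_left M 1
      _ ≤ Real.log x := hlog
      _ ≤ Real.log x ^ n := le_self_pow₀ ((le_max_right M 1).trans hlog) hn
    exact (sub_le_self M (by positivity)).trans hpow
  · have hM : M ≤ L * E * x⁻¹ := calc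
      M ≤ L * 1 := (le_max_left M 1).trans_eq (mul_one L).symm
      _ ≤ L * (E * x⁻¹) := by
        gcongr
        rwa [← div_eq_mul_inv, one_le_div hx]
      _ = L * E * x⁻¹ := (mul_assoc _ _ _).symm
    have hlog : -Real.log x ^ n ≤ n.factorial * (E ^ 2 + 1) * x⁻¹ := calc
      -Real.log x ^ n ≤ |Real.log x| ^ n := (neg_le_abs _).trans_eq (abs_pow _ n)
      _ ≤ n.factorial * (x ^ 2 * x⁻¹ + x⁻¹) := by
        have hbound := abs_log_pow_le n one_pos hx
        rw [one_pow, div_one, Real.rpow_one, Real.rpow_neg_one] at hbound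
        rwa [pow_two, mul_inv_cancel_right₀ hx.ne']
      _ ≤ n.factorial * (E ^ 2 * x⁻¹ + x⁻¹) := by gcongr
      _ = n.factorial * (E ^ 2 + 1) * x⁻¹ := by ring
    linarith

theorem exists_sub_div_le_gammaLogMoment {n : ℕ} (hn : n ≠ 0) (M : ℝ) :
    ∃ Q, ∀ s, 1 < s → M - Q / (s - 1) ≤ gammaLogMoment n s := by
  obtain ⟨Q, hQ⟩ := exists_sub_mul_inv_le_log_pow hn M
  refine ⟨Q, fun s hs => ?_⟩
  have hs0 : 0 < s + 0 := by linarith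
  have hs1 : 0 < s + -1 := by linarith
  have hmono := setIntegral_mono_on
    (((integrableOn_rpow_mul_gammaWeight hs0).const_mul M).sub
      ((integrableOn_rpow_mul_gammaWeight hs1).const_mul Q))
    (integrableOn_log_pow_mul_gammaWeight n (one_pos.trans hs)) measurableSet_Ioi fun x hx => ?_
  · rw [integral_sub' ((integrableOn_rpow_mul_gammaWeight hs0).const_mul M)
      ((integrableOn_rpow_mul_gammaWeight hs1).const_mul Q), integral_const_mul,
      integral_const_mul, integral_rpow_mul_gammaWeight hs0, integral_rpow_mul_gammaWeight hs1,
      add_zero, ← sub_eq_add_neg] at hmono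
    have hrec : Real.Gamma s = (s - 1) * Real.Gamma (s - 1) := by
      simpa using Real.Gamma_add_one (sub_pos.2 hs).ne'
    rw [gammaLogMoment, le_div_iff₀ (Real.Gamma_pos_of_pos (one_pos.trans hs))]
    refine le_trans (le_of_eq ?_) hmono
    rw [sub_mul, hrec, ← mul_assoc (Q / _), div_mul_cancel₀ _ (sub_pos.2 hs).ne']
  · simp only [Pi.sub_apply]
    rw [Real.rpow_zero, one_mul, Real.rpow_neg_one, ← mul_assoc, ← sub_mul]
    exact mul_le_mul_of_nonneg_right (hQ x hx) (gammaWeight_pos s hx).le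

theorem tendsto_gammaLogMoment_atTop {n : ℕ} (hn : n ≠ 0) :
    Tendsto (gammaLogMoment n) atTop atTop := by
  refine tendsto_atTop.2 fun b => ?_
  obtain ⟨Q, hQ⟩ := exists_sub_div_le_gammaLogMoment hn (b + 1)
  have hlim : Tendsto (fun s : ℝ => b + 1 - Q / (s - 1)) atTop (𝓝 (b + 1 - 0)) :=
    tendsto_const_nhds.sub
      (tendsto_const_nhds.div_atTop (tendsto_atTop_add_const_right _ (-1) tendsto_id))
  filter_upwards [hlim.eventually_const_le (by linarith : b < b + 1 - 0), eventually_gt_atTop 1]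
    with s hb hs
  exact hb.trans (hQ s hs)

theorem Gamma_add_le_rpow_mul_Gamma {s δ : ℝ} (hs : 0 < s) (hδ : 0 < δ) (hδ' : δ < 1) :
    Real.Gamma (s + δ) ≤ s ^ δ * Real.Gamma s := by
  have hΓ := Real.Gamma_pos_of_pos hs
  calc Real.Gamma (s + δ)
      = Real.Gamma ((1 - δ) * s + δ * (s + 1)) := by ring_nf
    _ ≤ Real.Gamma s ^ (1 - δ) * Real.Gamma (s + 1) ^ δ :=
        Real.Gamma_mul_add_mul_le_rpow_Gamma_mul_rpow_Gamma hs (by linarith) (by linarith) hδ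
          (by ring)
    _ = s ^ δ * Real.Gamma s := by
        rw [Real.Gamma_add_one hs.ne', Real.mul_rpow hs.le hΓ.le, mul_left_comm,
          ← Real.rpow_add hΓ, sub_add_cancel, Real.rpow_one]

theorem abs_gammaLogMoment_le (n : ℕ) {δ s : ℝ} (hδ : 0 < δ) (hδ' : δ < 1) (hs : 3 ≤ s) :
    |gammaLogMoment n s| ≤ n.factorial / δ ^ n * (s ^ δ + 1) := by
  have hΓ : 0 < Real.Gamma s := Real.Gamma_pos_of_pos (by linarith)
  have hadd : 0 < s + δ := by linarith
  have hsub : 0 < s + -δ := by linarith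
  rw [gammaLogMoment, abs_div, abs_of_pos hΓ, div_le_iff₀ hΓ]
  calc |∫ x in Ioi 0, Real.log x ^ n * gammaWeight s x|
      ≤ ∫ x in Ioi 0, ‖Real.log x ^ n * gammaWeight s x‖ :=
        (Real.norm_eq_abs _).symm.trans_le (norm_integral_le_integral_norm _)
    _ ≤ ∫ x in Ioi 0, n.factorial / δ ^ n *
          (x ^ δ * gammaWeight s x + x ^ (-δ) * gammaWeight s x) :=
        setIntegral_mono_on (integrableOn_log_pow_mul_gammaWeight n (by linarith)).norm
          (((integrableOn_rpow_mul_gammaWeight hadd).add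
            (integrableOn_rpow_mul_gammaWeight hsub)).const_mul _) measurableSet_Ioi
          fun x hx => norm_log_pow_mul_gammaWeight_le n s hδ hx
    _ = n.factorial / δ ^ n * (Real.Gamma (s + δ) + Real.Gamma (s + -δ)) := by
        rw [integral_const_mul, integral_add (integrableOn_rpow_mul_gammaWeight hadd)
          (integrableOn_rpow_mul_gammaWeight hsub), integral_rpow_mul_gammaWeight hadd,
          integral_rpow_mul_gammaWeight hsub]
    _ ≤ n.factorial / δ ^ n * (s ^ δ * Real.Gamma s + 1 * Real.Gamma s) := by
        gcongr
        · exact Gamma_add_le_rpow_mul_Gamma (by linarith) hδ hδ'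
        · rw [one_mul]
          exact Real.Gamma_strictMonoOn_Ici.monotoneOn (mem_Ici.2 (by linarith))
            (mem_Ici.2 (by linarith)) (by linarith)
    _ = n.factorial / δ ^ n * (s ^ δ + 1) * Real.Gamma s := by ring

theorem gammaLogMoment_isBigO_rpow (n : ℕ) {δ : ℝ} (hδ : 0 < δ) (hδ' : δ < 1) :
    gammaLogMoment n =O[atTop] fun s => s ^ δ := by
  have hbound : gammaLogMoment n =O[atTop] fun s => n.factorial / δ ^ n * (s ^ δ + 1) := by
    refine IsBigO.of_bound' ?_
    filter_upwards [eventually_ge_atTop 3] with s hs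
    exact (abs_gammaLogMoment_le n hδ hδ' hs).trans (le_abs_self _)
  have hone : (fun _ => (1 : ℝ)) =o[atTop] fun s : ℝ => s ^ δ :=
    isLittleO_const_left.2 (.inr (tendsto_norm_atTop_atTop.comp (tendsto_rpow_atTop hδ)))
  exact hbound.trans (((isBigO_refl _ _).add hone.isBigO).const_mul_left _)

theorem rpow_isLittleO_id {a : ℝ} (ha : a < 1) : (fun s => s ^ a) =o[atTop] (id : ℝ → ℝ) := by
  have hlim := tendsto_rpow_neg_atTop (sub_pos.2 ha)
  refine (((isLittleO_one_iff ℝ).2 hlim).mul_isBigO (isBigO_refl (id : ℝ → ℝ) atTop)).congr' ?_ ?_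
  · filter_upwards [eventually_gt_atTop 0] with s hs
    rw [id, neg_sub, Real.rpow_sub_one hs.ne', div_mul_cancel₀ _ hs.ne']
  · filter_upwards with s
    rw [one_mul]

theorem gammaLogMoment_pow_isLittleO_id (n k : ℕ) :
    (fun s => gammaLogMoment n s ^ k) =o[atTop] (id : ℝ → ℝ) := by
  have hδ : (0 : ℝ) < 1 / (k + 2) := by positivity
  have hδ' : (1 : ℝ) / (k + 2) < 1 := by
    rw [div_lt_one (by positivity)]
    linarith [k.cast_nonneg (α := ℝ)]
  have hexp : (1 : ℝ) / (k + 2) * k < 1 := by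
    rw [div_mul_eq_mul_div, one_mul, div_lt_one (by positivity)]
    linarith
  refine (((gammaLogMoment_isBigO_rpow n hδ hδ').pow k).congr' .rfl ?_).trans_isLittleO
    (rpow_isLittleO_id hexp)
  filter_upwards [eventually_ge_atTop 0] with s hs
  exact (Real.rpow_mul_natCast hs _ k).symm

theorem exp_neg_mul_rpow_le_Gamma {T s : ℝ} (hT : 0 < T) (hs : 1 ≤ s) :
    Real.exp (-T) * T ^ (s - 1) ≤ Real.Gamma s := by
  have hint := Real.GammaIntegral_convergent (one_pos.trans_le hs)
  have hsub : Ioi T ⊆ Ioi (0 : ℝ) := Ioi_subset_Ioi hT.le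
  calc Real.exp (-T) * T ^ (s - 1)
      = ∫ x in Ioi T, Real.exp (-x) * T ^ (s - 1) := by
        rw [integral_mul_const, integral_exp_neg_Ioi]
    _ ≤ ∫ x in Ioi T, Real.exp (-x) * x ^ (s - 1) := by
        refine setIntegral_mono_on ((integrableOn_exp_neg_Ioi T).mul_const _)
          (hint.mono_set hsub) measurableSet_Ioi fun x hx => ?_
        exact mul_le_mul_of_nonneg_left (Real.rpow_le_rpow hT.le (le_of_lt hx) (by linarith))
          (Real.exp_pos _).le
    _ ≤ ∫ x in Ioi 0, Real.exp (-x) * x ^ (s - 1) := by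
        refine setIntegral_mono_set hint ?_ hsub.eventuallyLE
        filter_upwards [ae_restrict_mem measurableSet_Ioi] with x hx
        exact (gammaWeight_pos s hx).le
    _ = Real.Gamma s := (Real.Gamma_eq_integral (one_pos.trans_le hs)).symm

theorem rpow_isBigO_Gamma {T : ℝ} (hT : 0 < T) : (fun s => T ^ s) =O[atTop] Real.Gamma := by
  refine IsBigO.of_bound (T * Real.exp T) ?_
  filter_upwards [eventually_ge_atTop 1] with s hs
  rw [Real.norm_of_nonneg (by positivity),
    Real.norm_of_nonneg (Real.Gamma_pos_of_pos (one_pos.trans_le hs)).le]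
  calc T ^ s = T * Real.exp T * (Real.exp (-T) * T ^ (s - 1)) := by
        rw [Real.rpow_sub_one hT.ne', Real.exp_neg]
        field_simp
    _ ≤ T * Real.exp T * Real.Gamma s := by
        gcongr
        exact exp_neg_mul_rpow_le_Gamma hT hs

end GammaDerivatives

section AsymptoticScales

/-- A family of real functions indexed by an ordered type, each of which is negligible along `l`
compared with the later ones. -/
def IsAsymptoticScale {ι α : Type*} [LT ι] (l : Filter α) (f : ι → α → ℝ) : Prop :=
  ∀ ⦃i j⦄, i < j → f i =o[l] f j

variable {ι κ α : Type*} {l : Filter α}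

theorem isAsymptoticScale_pow {f : α → ℝ} (hf : Tendsto f l atTop) :
    IsAsymptoticScale l fun (k : ℕ) x => f x ^ k :=
  fun _ _ hjk => (isLittleO_pow_pow_atTop_of_lt hjk).comp_tendsto hf

theorem IsAsymptoticScale.lex_mul [LT ι] [LT κ] {f : ι → α → ℝ} {g : κ → α → ℝ}
    (hg : IsAsymptoticScale l g)
    (hfg : ∀ ⦃i j⦄, i < j → ∀ k k', (fun x => f i x * g k x) =o[l] fun x => f j x * g k' x) :
    IsAsymptoticScale l fun (p : ι ×ₗ κ) x => f (ofLex p).1 x * g (ofLex p).2 x := by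
  rintro ⟨i, k⟩ ⟨j, k'⟩ (⟨_, _, hij⟩ | ⟨_, hkk'⟩)
  · exact hfg hij k k'
  · exact (isBigO_refl (f i) l).mul_isLittleO (hg hkk')

theorem one_isBigO_of_tendsto_atTop {f : α → ℝ} (hf : Tendsto f l atTop) :
    (fun _ => (1 : ℝ)) =O[l] f :=
  IsLittleO.isBigO ((isLittleO_one_left_iff ℝ).2 (tendsto_norm_atTop_atTop.comp hf))

theorem one_isBigO_pow_of_tendsto_atTop {f : α → ℝ} (hf : Tendsto f l atTop) (k : ℕ) :
    (fun _ => (1 : ℝ)) =O[l] fun x => f x ^ k := by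
  simpa only [one_pow] using (one_isBigO_of_tendsto_atTop hf).pow k

theorem IsAsymptoticScale.pow_lex_mul [LT κ] {h : α → ℝ} {g : κ → α → ℝ}
    (hg : IsAsymptoticScale l g) (hh : Tendsto h l atTop)
    (hgh : ∀ k k', g k =o[l] fun x => h x * g k' x) :
    IsAsymptoticScale l fun (p : ℕ ×ₗ κ) x => h x ^ (ofLex p).1 * g (ofLex p).2 x := by
  refine hg.lex_mul (f := fun d x => h x ^ d) fun i j hij k k' => ?_
  obtain ⟨e, rfl⟩ := Nat.exists_eq_add_of_lt hij
  have hlt := (isBigO_refl (fun x => h x ^ i) l).mul_isLittleO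
    ((one_isBigO_pow_of_tendsto_atTop hh e).mul_isLittleO (hgh k k'))
  refine hlt.congr (fun x => ?_) fun x => ?_
  · rw [one_mul]
  · ring

theorem IsAsymptoticScale.eventually_sum_ne_zero {𝕜 : Type*} [NormedField 𝕜] [LinearOrder ι]
    {f : ι → α → ℝ} (hf : IsAsymptoticScale l f) (hf0 : ∀ i, ∀ᶠ x in l, f i x ≠ 0)
    {J : Finset κ} (hJ : J.Nonempty) {rank : κ → ι} (hrank : Set.InjOn rank J)
    {term : κ → α → 𝕜} (hterm : ∀ k ∈ J, term k =Θ[l] f (rank k)) :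
    ∀ᶠ x in l, ∑ k ∈ J, term k x ≠ 0 := by
  classical
  obtain ⟨top, htop, hmax⟩ := J.exists_max_image rank hJ
  have hrest : (fun x => ∑ k ∈ J.erase top, term k x) =o[l] term top := by
    refine IsLittleO.fun_sum fun k hk => ?_
    obtain ⟨hne, hk⟩ := Finset.mem_erase.1 hk
    have hlt := (hmax k hk).lt_of_ne fun h => hne (hrank hk htop h)
    exact ((hterm k hk).trans_isLittleO (hf hlt)).trans_isTheta (hterm top htop).symm
  have hsum : (fun x => ∑ k ∈ J, term k x) =Θ[l] f (rank top) := by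
    refine IsTheta.trans (IsEquivalent.isTheta ?_) (hterm top htop)
    refine hrest.congr_left fun x => ?_
    rw [Pi.sub_apply, ← Finset.add_sum_erase J _ htop, add_sub_cancel_left]
  filter_upwards [hsum.eq_zero_iff, hf0 (rank top)] with x hx hx0
  exact hx.not.2 hx0

end AsymptoticScales

section MonomialScale

variable {w : ℝ → ℝ}

theorem pow_mul_pow_isLittleO_rpow (hw : ∀ k : ℕ, (fun s => w s ^ k) =o[atTop] (id : ℝ → ℝ))
    (A B : ℕ) {Q : ℝ} (hQ : 1 < Q) : (fun s => s ^ A * w s ^ B) =o[atTop] fun s => Q ^ s := by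
  have hexp := (isLittleO_pow_exp_pos_mul_atTop (A + 1) (Real.log_pos hQ)).congr_right
    fun s => (Real.rpow_def_of_pos (one_pos.trans hQ) s).symm
  exact ((isBigO_refl (fun s : ℝ => s ^ A) atTop).mul_isLittleO (hw B)).trans hexp

theorem one_isBigO_pow_mul_pow (hw : Tendsto w atTop atTop) (A B : ℕ) :
    (fun _ => (1 : ℝ)) =O[atTop] fun s => s ^ A * w s ^ B := by
  simpa only [one_mul, id] using
    (one_isBigO_pow_of_tendsto_atTop tendsto_id A).mul (one_isBigO_pow_of_tendsto_atTop hw B)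

/-- The monomial `Γ(s)ᵈ N⁻ˢ sᴬ w(s)ᴮ`, where `p = (d, N, A, B)`. The order on the indices, in which
`N` is reversed, is the one by size as `s → ∞` when `w` tends to infinity more slowly than every
positive power of `s`. -/
noncomputable def gammaMonomial (w : ℝ → ℝ) (p : ℕ ×ₗ ℕ+ᵒᵈ ×ₗ ℕ ×ₗ ℕ) (s : ℝ) : ℝ :=
  Real.Gamma s ^ (ofLex p).1 *
    ((((OrderDual.ofDual (ofLex (ofLex p).2).1 : ℕ+) : ℝ) ^ s)⁻¹ *
      (s ^ (ofLex (ofLex (ofLex p).2).2).1 * w s ^ (ofLex (ofLex (ofLex p).2).2).2))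

theorem gammaMonomial_ne_zero (hw : Tendsto w atTop atTop) (p : ℕ ×ₗ ℕ+ᵒᵈ ×ₗ ℕ ×ₗ ℕ) :
    ∀ᶠ s in atTop, gammaMonomial w p s ≠ 0 := by
  filter_upwards [eventually_gt_atTop 0, hw.eventually_gt_atTop 0] with s hs hws
  have := Real.Gamma_pos_of_pos hs
  unfold gammaMonomial
  positivity

theorem isAsymptoticScale_pow_mul_pow (hw : Tendsto w atTop atTop)
    (hw' : ∀ k : ℕ, (fun s => w s ^ k) =o[atTop] (id : ℝ → ℝ)) :
    IsAsymptoticScale atTop fun (p : ℕ ×ₗ ℕ) s => s ^ (ofLex p).1 * w s ^ (ofLex p).2 :=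
  (isAsymptoticScale_pow hw).pow_lex_mul tendsto_id fun B B' => by
    simpa only [mul_one, id] using (hw' B).mul_isBigO (one_isBigO_pow_of_tendsto_atTop hw B')

theorem isAsymptoticScale_inv_rpow_mul_pow_mul_pow (hw : Tendsto w atTop atTop)
    (hw' : ∀ k : ℕ, (fun s => w s ^ k) =o[atTop] (id : ℝ → ℝ)) :
    IsAsymptoticScale atTop fun (p : ℕ+ᵒᵈ ×ₗ ℕ ×ₗ ℕ) (s : ℝ) =>
      (((OrderDual.ofDual (ofLex p).1 : ℕ+) : ℝ) ^ s)⁻¹ *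
        (s ^ (ofLex (ofLex p).2).1 * w s ^ (ofLex (ofLex p).2).2) := by
  refine (isAsymptoticScale_pow_mul_pow hw hw').lex_mul
    (f := fun (N : ℕ+ᵒᵈ) (s : ℝ) => (((OrderDual.ofDual N : ℕ+) : ℝ) ^ s)⁻¹)
    fun N N' hN p p' => ?_
  set a : ℝ := ((OrderDual.ofDual N : ℕ+) : ℝ)
  set b : ℝ := ((OrderDual.ofDual N' : ℕ+) : ℝ)
  have hb : 0 < b := by positivity
  have hba : b < a := Nat.cast_lt.2 (OrderDual.ofDual_lt_ofDual.2 hN)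
  have hgrowth := (pow_mul_pow_isLittleO_rpow hw' (ofLex p).1 (ofLex p).2
    ((one_lt_div hb).2 hba)).mul_isBigO (one_isBigO_pow_mul_pow hw (ofLex p').1 (ofLex p').2)
  refine ((isBigO_refl (fun s : ℝ => (a ^ s)⁻¹) atTop).mul_isLittleO hgrowth).congr
    (fun s => ?_) fun s => ?_
  · rw [mul_one]
  · have ha : a ^ s ≠ 0 := (Real.rpow_pos_of_pos (hb.trans hba) s).ne'
    rw [Real.div_rpow (hb.trans hba).le hb.le]
    field_simp

theorem inv_rpow_isBigO_one (N : ℕ+) :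
    (fun s : ℝ => ((N : ℝ) ^ s)⁻¹) =O[atTop] fun _ => (1 : ℝ) := by
  refine IsBigO.of_bound 1 ?_
  filter_upwards [eventually_ge_atTop 0] with s hs
  rw [norm_one, mul_one, norm_inv, Real.norm_of_nonneg (by positivity)]
  exact inv_le_one_of_one_le₀ (Real.one_le_rpow (by exact_mod_cast N.pos) hs)

theorem tendsto_Gamma_atTop : Tendsto Real.Gamma atTop atTop := by
  have hpow := tendsto_norm_atTop_atTop.comp (tendsto_rpow_atTop_of_base_gt_one 2 one_lt_two)
  have hnorm := (isLittleO_one_left_iff ℝ).1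
    (((isLittleO_one_left_iff ℝ).2 hpow).trans_isBigO (rpow_isBigO_Gamma two_pos))
  refine hnorm.congr' ?_
  filter_upwards [eventually_gt_atTop 0] with s hs
  exact Real.norm_of_nonneg (Real.Gamma_pos_of_pos hs).le

theorem isAsymptoticScale_gammaMonomial (hw : Tendsto w atTop atTop)
    (hw' : ∀ k : ℕ, (fun s => w s ^ k) =o[atTop] (id : ℝ → ℝ)) :
    IsAsymptoticScale atTop (gammaMonomial w) := by
  refine (isAsymptoticScale_inv_rpow_mul_pow_mul_pow hw hw').pow_lex_mul tendsto_Gamma_atTop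
    fun p p' => ?_
  set N : ℕ+ := OrderDual.ofDual (ofLex p).1
  set N' : ℕ+ := OrderDual.ofDual (ofLex p').1
  have hsmall := (inv_rpow_isBigO_one N).mul_isLittleO
    (pow_mul_pow_isLittleO_rpow hw' (ofLex (ofLex p).2).1 (ofLex (ofLex p).2).2 one_lt_two)
  have hΓ := ((rpow_isBigO_Gamma (by positivity : (0 : ℝ) < 2 * N')).mul
    (isBigO_refl (fun s : ℝ => ((N' : ℝ) ^ s)⁻¹) atTop)).mul
      (one_isBigO_pow_mul_pow hw (ofLex (ofLex p').2).1 (ofLex (ofLex p').2).2)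
  refine hsmall.trans_isBigO (hΓ.congr (fun s => ?_) fun s => mul_assoc _ _ _)
  rw [Real.mul_rpow zero_le_two (by positivity), mul_one, one_mul,
    mul_inv_cancel_right₀ (by positivity)]

end MonomialScale

section PolynomialCoefficients

open MvPolynomial

/-- Polynomials in the variables `σ ⊕ τ` with coefficients in `R[X]`, rewritten as polynomials in
`X` (the variable `none`) and the variables `τ` with coefficients in `MvPolynomial σ R`. -/
noncomputable def polynomialCoeffSwap (σ τ R : Type*) [CommSemiring R] :
    MvPolynomial (σ ⊕ τ) (Polynomial R) ≃ₐ[R] MvPolynomial (Option τ) (MvPolynomial σ R) :=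
  (optionEquivRight R (σ ⊕ τ)).symm.trans
    ((renameEquiv R ((Equiv.optionEquivSumPUnit.{0} (σ ⊕ τ)).trans
      ((Equiv.sumAssoc σ τ PUnit).trans (((Equiv.refl σ).sumCongr
        (Equiv.optionEquivSumPUnit τ).symm).trans (Equiv.sumComm σ (Option τ)))))).trans
          (sumAlgEquiv R (Option τ) σ))

theorem eval₂_polynomialCoeffSwap {σ τ R : Type*} [CommSemiring R] (z : R) (u : σ → R) (v : τ → R)
    (P : MvPolynomial (σ ⊕ τ) (Polynomial R)) :
    eval₂ (eval u) (fun o : Option τ => o.elim z v) (polynomialCoeffSwap σ τ R P) =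
      eval₂ (Polynomial.evalRingHom z) (Sum.elim u v) P := by
  obtain ⟨p, rfl⟩ := (optionEquivRight R (σ ⊕ τ)).surjective P
  simp only [polynomialCoeffSwap, AlgEquiv.trans_apply, AlgEquiv.symm_apply_apply]
  induction p using MvPolynomial.induction_on with
  | C a => simp
  | add p q hp hq => simp only [map_add, eval₂_add, hp, hq]
  | mul_X p o hp =>
    simp only [map_mul, eval₂_mul, hp]
    congr 1
    rcases o with _ | i | j <;> simp

end PolynomialCoefficients

section Independence

open MvPolynomial

/-- The index in the scale `gammaMonomial` of the order of `q(ζ, ζ', …) sᴬ Γᵃ (Γ⁽ⁿ⁾)ᵇ`, where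
`κ = (A, a, b)` lists the exponents and `q(ζ, ζ', …)` is of order `N⁻ˢ`. -/
def exponentRank (N : (Option (Fin 2) →₀ ℕ) → ℕ+) (κ : Option (Fin 2) →₀ ℕ) :
    ℕ ×ₗ ℕ+ᵒᵈ ×ₗ ℕ ×ₗ ℕ :=
  toLex (κ (some 0) + κ (some 1), toLex (OrderDual.toDual (N κ), toLex (κ none, κ (some 1))))

theorem exponentRank_injective (N : (Option (Fin 2) →₀ ℕ) → ℕ+) :
    Function.Injective (exponentRank N) := by
  intro κ κ' h
  simp only [exponentRank, EmbeddingLike.apply_eq_iff_eq, Prod.mk.injEq] at h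
  obtain ⟨hsum, -, hnone, hone⟩ := h
  ext (_ | j)
  · exact hnone
  · fin_cases j
    · exact Nat.add_right_cancel (hsum.trans (congrArg _ hone.symm))
    · exact hone

theorem prod_option_pow_isTheta_gammaMonomial (n : ℕ) {f : ℝ → ℂ}
    {N : (Option (Fin 2) →₀ ℕ) → ℕ+} {κ : Option (Fin 2) →₀ ℕ}
    (hf : f =Θ[atTop] fun s => ((N κ : ℝ) ^ s)⁻¹) :
    (fun s : ℝ => f s * ∏ o, (o.elim (s : ℂ) fun j : Fin 2 =>
        iteratedDeriv (![0, n] j) Complex.Gamma s) ^ κ o) =Θ[atTop]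
      gammaMonomial (gammaLogMoment n) (exponentRank N κ) := by
  have hmonomial := hf.mul (Complex.isTheta_ofReal
    (fun s => s ^ κ none * (Real.Gamma s ^ κ (some 0) *
      (Real.Gamma s * gammaLogMoment n s) ^ κ (some 1))) atTop)
  refine (EventuallyEq.trans_isTheta ?_ hmonomial).trans_eventuallyEq ?_
  · filter_upwards [eventually_gt_atTop 0] with s hs
    rw [Fintype.prod_option, Fin.prod_univ_two]
    simp only [Option.elim, Matrix.cons_val_zero, Matrix.cons_val_one, iteratedDeriv_zero,
      Complex.Gamma_ofReal, iteratedDeriv_Gamma_ofReal n hs]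
    push_cast
    rfl
  · filter_upwards with s
    simp only [gammaMonomial, exponentRank, ofLex_toLex, OrderDual.ofDual_toDual]
    ring

theorem zeta_gamma_independence_one_derivative_general (M n : ℕ) (hn : n ≠ 0)
    (P : MvPolynomial (Fin M ⊕ Fin 2) (Polynomial ℂ))
    (hP : ∃ᶠ s : ℝ in atTop, eval₂ (Polynomial.evalRingHom (s : ℂ))
      (Sum.elim (fun i : Fin M => iteratedDeriv (i : ℕ) riemannZeta s)
        (fun j : Fin 2 => iteratedDeriv (![0, n] j) Complex.Gamma s)) P = 0) :
    P = 0 := by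
  by_contra hP0
  set Q := polynomialCoeffSwap (Fin M) (Fin 2) ℂ P
  have hQ : Q.support.Nonempty := support_nonempty.2 (by simpa [Q] using hP0)
  choose! N hN using fun κ (hκ : κ ∈ Q.support) =>
    exists_eval_iteratedDeriv_riemannZeta_isTheta (mem_support_iff.1 hκ)
  have hw := tendsto_gammaLogMoment_atTop hn
  have hsum := (isAsymptoticScale_gammaMonomial hw
    (gammaLogMoment_pow_isLittleO_id n)).eventually_sum_ne_zero (gammaMonomial_ne_zero hw) hQ
      (exponentRank_injective N).injOn
      fun κ hκ => prod_option_pow_isTheta_gammaMonomial n (hN κ hκ)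
  refine hP (hsum.mono fun s hs => ?_)
  rwa [ne_eq, ← eval₂_eq', eval₂_polynomialCoeffSwap] at hs

end Independence

/-- **The `ℓ = 1` case.** If `P(u₀,…,u_m; v₀,v₁)` is a polynomial with polynomial
coefficients in `z` such that `P(ζ(z),…,ζ^{(m)}(z); Γ(z), Γ^{(n)}(z)) = 0` for all
`z ≠ 1` not a nonpositive integer, then `P = 0`. -/
theorem zeta_gamma_independence_one_derivative (m n : ℕ) (hn : 1 ≤ n)
    (P : MvPolynomial (Fin (m + 1) ⊕ Fin 2) (Polynomial ℂ))
    (hP : ∀ z : ℂ, z ≠ 1 → (∀ k : ℕ, z ≠ -(k : ℂ)) →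
      MvPolynomial.eval₂ (Polynomial.evalRingHom z)
        (Sum.elim (fun i : Fin (m + 1) => iteratedDeriv (i : ℕ) riemannZeta z)
          (fun j : Fin 2 => iteratedDeriv (![0, n] j) Complex.Gamma z)) P = 0) :
    P = 0 := by
  refine zeta_gamma_independence_one_derivative_general (m + 1) n (Nat.one_le_iff_ne_zero.1 hn) P
    (Eventually.frequently ?_)
  filter_upwards [eventually_gt_atTop 1] with s hs
  exact hP s (by exact_mod_cast hs.ne') fun k hk => by
    have : s = -(k : ℝ) := by exact_mod_cast hk
    linarith [k.cast_nonneg (α := ℝ)]
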